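/- For r = p/q ∈ ℚ∩(0,1) with s = s(r), t = t(r), the Hausdorff dimension of the set J(π(st^∞), π(ts^∞)) = {x ∈ [0,1] : T^n x ∉ (π(st^∞), π(ts^∞)) for all n ≥ 0} equals 1/q. -/

import Mathlib

/-- `u` is a (contiguous) factor of `w`. -/
def IsFactor (u w : List Bool) : Prop := ∃ l r : List Bool, w = l ++ u ++ r

/-- A binary word is balanced: any two factors of equal length have numbers of
`true`s (ones) differing by at most 1. -/
def BalancedW (w : List Bool) : Prop :=
  ∀ u v : List Bool, IsFactor u w → IsFactor v w → u.length = v.length →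
    (u.count true : ℤ) - (v.count true : ℤ) ≤ 1

/-- A word is cyclically balanced if all its cyclic rotations are balanced. -/
def CyclBalanced (w : List Bool) : Prop := ∀ k : ℕ, BalancedW (w.rotate k)

/-- Lexicographic `≤` on finite binary words (`false < true`). -/
def WordLe (u v : List Bool) : Prop := u = v ∨ List.Lex (· < ·) u v

/-- `w = s(p/q)`: the lexicographically largest cyclically balanced word of
length `q` with `p` ones beginning with `0`. -/
def IsSWord (p q : ℕ) (w : List Bool) : Prop :=
  w.length = q ∧ w.count true = p ∧ CyclBalanced w ∧ w.head? = some false ∧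
  ∀ w' : List Bool, w'.length = q → w'.count true = p → CyclBalanced w' →
    w'.head? = some false → WordLe w' w

/-- `w = t(p/q)`: the lexicographically smallest cyclically balanced word of
length `q` with `p` ones beginning with `1`. -/
def IsTWord (p q : ℕ) (w : List Bool) : Prop :=
  w.length = q ∧ w.count true = p ∧ CyclBalanced w ∧ w.head? = some true ∧
  ∀ w' : List Bool, w'.length = q → w'.count true = p → CyclBalanced w' →
    w'.head? = some true → WordLe w w'

noncomputable def T (x : ℝ) : ℝ := if x ≤ 1/2 then 2*x else 2*x - 1

/-- `π(w) = Σ_j w_j 2^{-j}`. -/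
noncomputable def piW (w : ℕ → Bool) : ℝ :=
  ∑' j : ℕ, (if w j then (1:ℝ) else 0) / 2 ^ (j + 1)

/-- The infinite periodic word `w^∞`. -/
def periodize (w : List Bool) (j : ℕ) : Bool := w.getD (j % w.length) false

/-- The infinite word `u v^∞`. -/
def wordThenPeriodic (u v : List Bool) (j : ℕ) : Bool :=
  if j < u.length then u.getD j false else periodize v (j - u.length)

/-- `w` is the infinite concatenation `a 0 ++ a 1 ++ a 2 ++ ⋯`. -/
def IsConcat (a : ℕ → List Bool) (w : ℕ → Bool) : Prop :=
  ∀ n : ℕ, ∀ j < (((List.range n).map a).flatten).length,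
    (((List.range n).map a).flatten).getD j false = w j

/-! A cyclically balanced word of length `q` with `p` ones codes an orbit of the rotation by `-p` of
`ℤ / q`. The corresponding points of `[0, 1]` form a periodic orbit on which `T` acts as the
rotation, and `L = π(s^∞)` and `R = π(t^∞)` are the consecutive points of it on either side of
`1 / 2`. Following the gap `(L, R)` backwards along the rotation shows that
`R - L = 1 / 4 + (R - L) / 2 ^ q`, so that the hole is `(R - 1 / 4, L + 1 / 4)`, and that `T ^ q` is
the first return map of `[L, R]` minus the hole, with two full affine branches of slope `2 ^ q`
fixing `L` and `R`. The survivors in `[L, R]` thus form the self-similar set of two homotheties of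
ratio `2 ^ (-q)`, of dimension `1 / q`. The orbits that never enter `[L, R]` contribute dimension
zero: an interval of length more than `1 / 4` around `1 / 2` leaves no room for a second branch. -/

open Set Filter Topology MeasureTheory
open scoped ENNReal NNReal

section HausdorffDimension

theorem dimH_le_of_forall_exists_cover {X : Type*} [EMetricSpace X] {E : Set X} {ι : ℕ → Type*}
    [∀ n, Fintype (ι n)] {r : ℕ → ℝ≥0∞} {C : ℝ≥0∞} {d : ℝ≥0} (hr : Tendsto r atTop (𝓝 0))
    (hC : C ≠ ∞) (hcard : ∀ n, Fintype.card (ι n) * r n ^ (d : ℝ) ≤ C)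
    (hcover : ∀ n, ∃ t : ι n → Set X, E ⊆ ⋃ i, t i ∧ ∀ i, Metric.ediam (t i) ≤ r n) :
    dimH E ≤ d := by
  borelize X
  choose t hsub hdiam using hcover
  have hle := Measure.hausdorffMeasure_le_liminf_sum d E r hr t (.of_forall hdiam) (.of_forall hsub)
  have hsum (n : ℕ) : ∑ i, Metric.ediam (t n i) ^ (d : ℝ) ≤ C :=
    calc ∑ i, Metric.ediam (t n i) ^ (d : ℝ) ≤ ∑ _i : ι n, r n ^ (d : ℝ) := by
          gcongr with i; exact hdiam n i
      _ ≤ C := by simpa using hcard n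
  have hliminf : liminf (fun n ↦ ∑ i, Metric.ediam (t n i) ^ (d : ℝ)) atTop ≤ C :=
    (liminf_le_liminf (.of_forall hsum)).trans (liminf_const C).le
  exact dimH_le_of_hausdorffMeasure_ne_top (ne_top_of_le_ne_top hC (hle.trans hliminf))

theorem exists_cover_of_subset_iUnion_image {X ι : Type*} [PseudoEMetricSpace X] {E : Set X}
    {K : ℝ≥0} {f : ι → X → X} (hf : ∀ i, LipschitzWith K (f i)) (hE : E ⊆ ⋃ i, f i '' E) (n : ℕ) :
    ∃ t : (Fin n → ι) → Set X,
      E ⊆ ⋃ σ, t σ ∧ ∀ σ, Metric.ediam (t σ) ≤ K ^ n * Metric.ediam E := by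
  induction n with
  | zero => exact ⟨fun _ ↦ E, by simp [iUnion_const], by simp⟩
  | succ n ih =>
    obtain ⟨t, hsub, hdiam⟩ := ih
    refine ⟨fun σ ↦ f (σ 0) '' t (Fin.tail σ), fun x hx ↦ ?_, fun σ ↦ ?_⟩
    · obtain ⟨i, y, hy, rfl⟩ := mem_iUnion.1 (hE hx)
      obtain ⟨σ, hσ⟩ := mem_iUnion.1 (hsub hy)
      exact mem_iUnion.2 ⟨Fin.cons i σ, y, by simpa using hσ, by simp⟩
    · calc Metric.ediam (f (σ 0) '' t (Fin.tail σ)) ≤ K * Metric.ediam (t (Fin.tail σ)) :=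
            (hf _).ediam_image_le _
        _ ≤ K * (K ^ n * Metric.ediam E) := by gcongr; exact hdiam _
        _ = K ^ (n + 1) * Metric.ediam E := by rw [pow_succ', mul_assoc]

theorem dimH_le_of_subset_iUnion_image {X ι : Type*} [EMetricSpace X] [Fintype ι] {E : Set X}
    {K d : ℝ≥0} {f : ι → X → X} (hf : ∀ i, LipschitzWith K (f i)) (hK : K < 1)
    (hd : Fintype.card ι * K ^ (d : ℝ) ≤ 1) (hdiam : Metric.ediam E ≠ ∞)
    (hE : E ⊆ ⋃ i, f i '' E) : dimH E ≤ d := by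
  have hlim : Tendsto (fun n : ℕ ↦ (K : ℝ≥0∞) ^ n * Metric.ediam E) atTop (𝓝 0) := by
    have := ENNReal.Tendsto.mul_const (ENNReal.tendsto_pow_atTop_nhds_zero_of_lt_one
      (ENNReal.coe_lt_one_iff.2 hK)) (Or.inr hdiam)
    rwa [zero_mul] at this
  refine dimH_le_of_forall_exists_cover hlim (ENNReal.rpow_ne_top_of_nonneg d.coe_nonneg hdiam)
    (fun n ↦ ?_) (exists_cover_of_subset_iUnion_image hf hE)
  have hd' : (Fintype.card ι : ℝ≥0∞) * (K : ℝ≥0∞) ^ (d : ℝ) ≤ 1 := by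
    rw [← ENNReal.coe_rpow_of_nonneg _ d.coe_nonneg]
    exact_mod_cast hd
  calc (Fintype.card (Fin n → ι) : ℝ≥0∞) * (K ^ n * Metric.ediam E) ^ (d : ℝ)
      = (Fintype.card ι * (K : ℝ≥0∞) ^ (d : ℝ)) ^ n * Metric.ediam E ^ (d : ℝ) := by
        rw [ENNReal.mul_rpow_of_nonneg _ _ d.coe_nonneg, mul_pow, ← ENNReal.rpow_natCast (K : ℝ≥0∞),
          ← ENNReal.rpow_mul, mul_comm (n : ℝ), ENNReal.rpow_mul, ENNReal.rpow_natCast]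
        simp [mul_assoc]
    _ ≤ 1 ^ n * Metric.ediam E ^ (d : ℝ) := by gcongr
    _ = Metric.ediam E ^ (d : ℝ) := by rw [one_pow, one_mul]

theorem dist_le_pow_mul_of_dist_iterate_lt {X : Type*} [PseudoMetricSpace X] {E : Set X} {f : X → X}
    {c η : ℝ} (hc0 : 0 ≤ c) (hc1 : c ≤ 1) (hf : MapsTo f E E)
    (h : ∀ x ∈ E, ∀ y ∈ E, dist (f x) (f y) < η → dist x y ≤ c * dist (f x) (f y)) (n : ℕ) {x y : X}
    (hx : x ∈ E) (hy : y ∈ E) (hxy : dist (f^[n] x) (f^[n] y) < η) :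
    dist x y ≤ c ^ n * dist (f^[n] x) (f^[n] y) := by
  induction n generalizing x y with
  | zero => simp
  | succ n ih =>
    have htail : dist (f x) (f y) ≤ c ^ n * dist (f^[n + 1] x) (f^[n + 1] y) :=
      ih (hf hx) (hf hy) hxy
    have hlt : dist (f x) (f y) < η :=
      (htail.trans (mul_le_of_le_one_left dist_nonneg (pow_le_one₀ hc0 hc1))).trans_lt hxy
    calc dist x y ≤ c * dist (f x) (f y) := h x hx y hy hlt
      _ ≤ c * (c ^ n * dist (f^[n + 1] x) (f^[n + 1] y)) := by gcongr
      _ = c ^ (n + 1) * dist (f^[n + 1] x) (f^[n + 1] y) := by rw [pow_succ', mul_assoc]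

-- Pulling a fixed finite cover by small balls back along `f^[n]` covers `E` by a bounded number of
-- sets whose diameters tend to `0`.
theorem dimH_eq_zero_of_backward_contracting {X : Type*} [MetricSpace X] {E : Set X} {f : X → X}
    {c η : ℝ} (hE : TotallyBounded E) (hη : 0 < η) (hc0 : 0 ≤ c) (hc1 : c < 1) (hf : MapsTo f E E)
    (h : ∀ x ∈ E, ∀ y ∈ E, dist (f x) (f y) < η → dist x y ≤ c * dist (f x) (f y)) :
    dimH E = 0 := by
  obtain ⟨t, ht, hcover⟩ := Metric.totallyBounded_iff.1 hE (η / 2) (half_pos hη)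
  have := ht.fintype
  have hlim : Tendsto (fun n : ℕ ↦ ENNReal.ofReal (c ^ n * η)) atTop (𝓝 0) := by
    simpa using ENNReal.tendsto_ofReal
      ((tendsto_pow_atTop_nhds_zero_of_lt_one hc0 hc1).mul_const η)
  refine le_antisymm ?_ zero_le
  refine dimH_le_of_forall_exists_cover (ι := fun _ ↦ t) (d := 0) hlim
    (ENNReal.natCast_ne_top (Fintype.card t)) (fun n ↦ by simp)
    fun n ↦ ⟨fun z ↦ E ∩ f^[n] ⁻¹' Metric.ball z (η / 2), fun x hx ↦ ?_,
      fun z ↦ Metric.ediam_le_of_forall_dist_le ?_⟩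
  · obtain ⟨z, hz, hxz⟩ := mem_iUnion₂.1 (hcover (hf.iterate n hx))
    exact mem_iUnion.2 ⟨⟨z, hz⟩, hx, hxz⟩
  · rintro x ⟨hx, hxz⟩ y ⟨hy, hyz⟩
    have hxy : dist (f^[n] x) (f^[n] y) < η :=
      calc dist (f^[n] x) (f^[n] y) ≤ dist (f^[n] x) z + dist (f^[n] y) z := dist_triangle_right ..
        _ < η / 2 + η / 2 := add_lt_add hxz hyz
        _ = η := add_halves η
    calc dist x y ≤ c ^ n * dist (f^[n] x) (f^[n] y) :=
          dist_le_pow_mul_of_dist_iterate_lt hc0 hc1.le hf h n hx hy hxy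
      _ ≤ c ^ n * η := by gcongr

theorem dimH_preimage_le_of_lipschitz_leftInverse {X Y ι : Type*} [EMetricSpace X] [EMetricSpace Y]
    [Countable ι] {f : X → Y} {g : ι → Y → X} {K : ι → ℝ≥0} (hg : ∀ i, LipschitzWith (K i) (g i))
    (hgf : ∀ x, ∃ i, g i (f x) = x) (A : Set Y) : dimH (f ⁻¹' A) ≤ dimH A := by
  have hsub : f ⁻¹' A ⊆ ⋃ i, g i '' A := fun x hx ↦ by
    obtain ⟨i, hi⟩ := hgf x
    exact mem_iUnion.2 ⟨i, f x, hx, hi⟩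
  calc dimH (f ⁻¹' A) ≤ ⨆ i, dimH (g i '' A) := (dimH_mono hsub).trans_eq (dimH_iUnion _)
    _ ≤ dimH A := iSup_le fun i ↦ (hg i).dimH_image_le A

theorem abs_ofDigits_sub_ofDigits_le_rpow {b : ℕ} {X : Type*} [PseudoMetricSpace X]
    {f : (ℕ → Fin b) → X} {c r : ℝ} {d : ℝ≥0} (hc : 0 < c) (hr : 0 < r)
    (hd : r ^ (d : ℝ) = (b : ℝ)⁻¹)
    (hf : ∀ x y, x ≠ y → c * r ^ PiNat.firstDiff x y ≤ dist (f x) (f y)) (x y : ℕ → Fin b) :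
    |Real.ofDigits x - Real.ofDigits y| ≤ (c⁻¹ * dist (f x) (f y)) ^ (d : ℝ) := by
  rcases eq_or_ne x y with rfl | hxy
  · simpa using Real.rpow_nonneg le_rfl _
  set k := PiNat.firstDiff x y
  calc |Real.ofDigits x - Real.ofDigits y| ≤ ((b : ℝ) ^ k)⁻¹ :=
        Real.abs_ofDigits_sub_ofDigits_le fun i hi ↦ PiNat.apply_eq_of_lt_firstDiff hi
    _ = (r ^ k) ^ (d : ℝ) := by rw [← inv_pow, ← hd, Real.rpow_pow_comm hr.le]
    _ ≤ (c⁻¹ * dist (f x) (f y)) ^ (d : ℝ) := by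
        gcongr
        rw [le_inv_mul_iff₀ hc]
        exact hf x y hxy

-- The map from `range f` to `[0, 1]` reading the coding sequence as base `b` digits is a Hölder
-- surjection of exponent `d`.
theorem le_dimH_range_of_mul_pow_firstDiff_le_dist {b : ℕ} (hb : 1 < b) {X : Type*} [MetricSpace X]
    {f : (ℕ → Fin b) → X} {c r : ℝ} {d : ℝ≥0} (hc : 0 < c) (hr : 0 < r)
    (hd : r ^ (d : ℝ) = (b : ℝ)⁻¹)
    (hf : ∀ x y, x ≠ y → c * r ^ PiNat.firstDiff x y ≤ dist (f x) (f y)) :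
    (d : ℝ≥0∞) ≤ dimH (range f) := by
  have hd0 : 0 < d := by
    refine pos_iff_ne_zero.2 fun h ↦ ?_
    rw [h, NNReal.coe_zero, Real.rpow_zero, eq_comm, inv_eq_one] at hd
    exact hb.ne' (by exact_mod_cast hd)
  have hinj : f.Injective := fun x y hxy ↦ by
    by_contra hne
    have hle := hf x y hne
    rw [hxy, dist_self] at hle
    exact hle.not_gt (by positivity)
  set g : X → ℝ := f.extend Real.ofDigits 0
  have hg (x) : g (f x) = Real.ofDigits x := hinj.extend_apply _ _ x
  have hholder : HolderOnWith (Real.toNNReal (c⁻¹ ^ (d : ℝ))) d g (range f) := by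
    rintro _ ⟨x, rfl⟩ _ ⟨y, rfl⟩
    rw [hg, hg, edist_dist, edist_dist, ENNReal.ofReal_rpow_of_nonneg dist_nonneg d.coe_nonneg,
      ← ENNReal.ofReal, ← ENNReal.ofReal_mul (by positivity),
      ← Real.mul_rpow (by positivity) dist_nonneg]
    exact ENNReal.ofReal_le_ofReal (abs_ofDigits_sub_ofDigits_le_rpow hc hr hd hf x y)
  have himage : Icc (0 : ℝ) 1 ⊆ g '' range f := fun z hz ↦ by
    obtain ⟨x, -, rfl⟩ := Real.ofDigits_SurjOn hb hz
    exact ⟨f x, mem_range_self x, hg x⟩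
  have hIcc : dimH (Icc (0 : ℝ) 1) = 1 := by
    simpa using Real.dimH_of_nonempty_interior (s := Icc (0 : ℝ) 1) (by simp)
  have hle : 1 ≤ dimH (range f) / d :=
    hIcc.symm.trans_le ((dimH_mono himage).trans (hholder.dimH_image_le hd0))
  rwa [ENNReal.le_div_iff_mul_le (by simp [hd0.ne']) (by simp), one_mul] at hle

end HausdorffDimension

section HomothetyCoding

/-- The point coded by the sequence `x` under the homotheties `y ↦ u i + r * (y - u i)`, i.e. the
limit of the compositions of the homotheties of indices `x 0, x 1, …`. -/
noncomputable def codedPoint {ι : Type*} (r : ℝ) (u : ι → ℝ) (x : ℕ → ι) : ℝ :=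
  ∑' n, (1 - r) * r ^ n * u (x n)

variable {ι : Type*} {r a b δ : ℝ} {u : ι → ℝ}

theorem hasSum_one_sub_mul_pow (hr0 : 0 ≤ r) (hr1 : r < 1) (c : ℝ) :
    HasSum (fun n : ℕ ↦ (1 - r) * r ^ n * c) c := by
  have h := ((hasSum_geometric_of_lt_one hr0 hr1).mul_left (1 - r)).mul_right c
  rwa [mul_inv_cancel₀ (sub_pos.2 hr1).ne', one_mul] at h

theorem summable_codedPoint (hr0 : 0 ≤ r) (hr1 : r < 1) (hu : ∀ i, u i ∈ Icc a b) (x : ℕ → ι) :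
    Summable fun n ↦ (1 - r) * r ^ n * u (x n) := by
  refine (hasSum_one_sub_mul_pow hr0 hr1 (max |a| |b|)).summable.of_norm_bounded fun n ↦ ?_
  have hw : 0 ≤ (1 - r) * r ^ n := mul_nonneg (sub_nonneg.2 hr1.le) (pow_nonneg hr0 n)
  rw [Real.norm_eq_abs, abs_mul, abs_of_nonneg hw]
  exact mul_le_mul_of_nonneg_left (abs_le_max_abs_abs (hu _).1 (hu _).2) hw

theorem codedPoint_mem_Icc (hr0 : 0 ≤ r) (hr1 : r < 1) (hu : ∀ i, u i ∈ Icc a b) (x : ℕ → ι) :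
    codedPoint r u x ∈ Icc a b := by
  have hw (n : ℕ) : 0 ≤ (1 - r) * r ^ n := mul_nonneg (sub_nonneg.2 hr1.le) (pow_nonneg hr0 n)
  have hsum := (summable_codedPoint hr0 hr1 hu x).hasSum
  exact ⟨hasSum_le (fun n ↦ mul_le_mul_of_nonneg_left (hu _).1 (hw n))
      (hasSum_one_sub_mul_pow hr0 hr1 a) hsum,
    hasSum_le (fun n ↦ mul_le_mul_of_nonneg_left (hu _).2 (hw n)) hsum
      (hasSum_one_sub_mul_pow hr0 hr1 b)⟩

theorem codedPoint_eq (hr0 : 0 ≤ r) (hr1 : r < 1) (hu : ∀ i, u i ∈ Icc a b) (x : ℕ → ι) :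
    codedPoint r u x = u (x 0) + r * (codedPoint r u (fun n ↦ x (n + 1)) - u (x 0)) := by
  have htail : ∑' n, (1 - r) * r ^ (n + 1) * u (x (n + 1)) =
      r * codedPoint r u fun n ↦ x (n + 1) := by
    rw [codedPoint, ← tsum_mul_left]
    exact tsum_congr fun n ↦ by ring
  rw [codedPoint, (summable_codedPoint hr0 hr1 hu x).tsum_eq_zero_add, htail]
  ring

theorem mul_pow_le_abs_codedPoint_sub (hr0 : 0 ≤ r) (hr1 : r < 1) (hu : ∀ i, u i ∈ Icc a b)
    (hδ : ∀ i j, i ≠ j → δ ≤ |u i - u j|) (k : ℕ) {x y : ℕ → ι} (hlt : ∀ n < k, x n = y n)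
    (hk : x k ≠ y k) :
    ((1 - r) * δ - r * (b - a)) * r ^ k ≤ |codedPoint r u x - codedPoint r u y| := by
  induction k generalizing x y with
  | zero =>
    set x' := codedPoint r u fun n ↦ x (n + 1)
    set y' := codedPoint r u fun n ↦ y (n + 1)
    have htail : |y' - x'| ≤ b - a :=
      abs_sub_le_of_le_of_le (codedPoint_mem_Icc hr0 hr1 hu _).1 (codedPoint_mem_Icc hr0 hr1 hu _).2
        (codedPoint_mem_Icc hr0 hr1 hu _).1 (codedPoint_mem_Icc hr0 hr1 hu _).2
    calc ((1 - r) * δ - r * (b - a)) * r ^ 0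
        ≤ |(1 - r) * (u (x 0) - u (y 0))| - |r * (y' - x')| := by
          rw [pow_zero, mul_one, abs_mul, abs_mul, abs_of_nonneg hr0,
            abs_of_pos (sub_pos.2 hr1)]
          gcongr
          exact hδ _ _ hk
      _ ≤ |(1 - r) * (u (x 0) - u (y 0)) - r * (y' - x')| := abs_sub_abs_le_abs_sub _ _
      _ = |codedPoint r u x - codedPoint r u y| := by
          rw [codedPoint_eq hr0 hr1 hu x, codedPoint_eq hr0 hr1 hu y]
          congr 1
          ring
  | succ k ih =>
    have htail := ih (fun n hn ↦ hlt (n + 1) (Nat.succ_lt_succ hn)) hk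
    rw [codedPoint_eq hr0 hr1 hu x, codedPoint_eq hr0 hr1 hu y, hlt 0 k.succ_pos,
      add_sub_add_left_eq_sub, ← mul_sub, sub_sub_sub_cancel_right, abs_mul, abs_of_nonneg hr0,
      pow_succ', mul_left_comm]
    exact mul_le_mul_of_nonneg_left htail hr0

theorem le_dimH_range_codedPoint {m : ℕ} (hm : 1 < m) {u : Fin m → ℝ} {d : ℝ≥0} (hr0 : 0 < r)
    (hr1 : r < 1) (hd : r ^ (d : ℝ) = (m : ℝ)⁻¹) (hu : ∀ i, u i ∈ Icc a b)
    (hδ : ∀ i j, i ≠ j → δ ≤ |u i - u j|) (hsep : r * (b - a) < (1 - r) * δ) :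
    (d : ℝ≥0∞) ≤ dimH (range (codedPoint r u)) :=
  le_dimH_range_of_mul_pow_firstDiff_le_dist hm (sub_pos.2 hsep) hr0 hd fun _ _ hxy ↦
    mul_pow_le_abs_codedPoint_sub hr0.le hr1 hu hδ _
      (fun _ ↦ PiNat.apply_eq_of_lt_firstDiff) (PiNat.apply_firstDiff_ne hxy)

end HomothetyCoding

section DoublingMap

theorem T_of_le {x : ℝ} (h : x ≤ 1 / 2) : T x = 2 * x := if_pos h

theorem T_of_lt {x : ℝ} (h : 1 / 2 < x) : T x = 2 * x - 1 := if_neg h.not_ge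

theorem mapsTo_T_Icc : MapsTo T (Icc 0 1) (Icc 0 1) := by
  rintro x ⟨h0, h1⟩
  rcases le_or_gt x (1 / 2) with hx | hx
  · rw [T_of_le hx]; constructor <;> linarith
  · rw [T_of_lt hx]; constructor <;> linarith

theorem dimH_preimage_T_le (A : Set ℝ) : dimH (T ⁻¹' A) ≤ dimH A := by
  refine dimH_preimage_le_of_lipschitz_leftInverse (ι := Bool) (K := fun _ ↦ 1)
    (g := fun i y ↦ (y + if i then 1 else 0) / 2) (fun i ↦ ?_) (fun x ↦ ?_) A
  · refine LipschitzWith.of_dist_le_mul fun x y ↦ ?_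
    rw [Real.dist_eq, Real.dist_eq, ← sub_div, add_sub_add_right_eq_sub, abs_div, abs_two,
      NNReal.coe_one, one_mul]
    exact half_le_self (abs_nonneg _)
  · rcases le_or_gt x (1 / 2) with h | h
    · exact ⟨false, by simp [T_of_le h]⟩
    · exact ⟨true, by simp [T_of_lt h]⟩

theorem dimH_iUnion_preimage_iterate_T_le (A : Set ℝ) : dimH (⋃ n, T^[n] ⁻¹' A) ≤ dimH A := by
  rw [dimH_iUnion]
  refine iSup_le fun n ↦ ?_
  induction n with
  | zero => rfl
  | succ n ih =>
    rw [Function.iterate_succ, preimage_comp]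
    exact (dimH_preimage_T_le _).trans ih

/-- The survivor set of the hole `H`: the points of `[0, 1]` whose orbit under the doubling map
never enters `H`. -/
def survivors (H : Set ℝ) : Set ℝ := {x | x ∈ Icc (0 : ℝ) 1 ∧ ∀ n : ℕ, T^[n] x ∉ H}

variable {H K : Set ℝ} {x y : ℝ}

theorem survivors_anti (h : H ⊆ K) : survivors K ⊆ survivors H :=
  fun _ hx ↦ ⟨hx.1, fun n hn ↦ hx.2 n (h hn)⟩

theorem not_mem_of_mem_survivors (hx : x ∈ survivors H) : x ∉ H := hx.2 0

theorem mapsTo_T_survivors (H : Set ℝ) : MapsTo T (survivors H) (survivors H) :=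
  fun _ hx ↦ ⟨mapsTo_T_Icc hx.1, fun n ↦ hx.2 (n + 1)⟩

theorem dimH_survivors_le_max (H K : Set ℝ) :
    dimH (survivors H) ≤ max (dimH (survivors (H ∪ K))) (dimH (survivors H ∩ K)) := by
  have hsub : survivors H ⊆ survivors (H ∪ K) ∪ ⋃ n, T^[n] ⁻¹' (survivors H ∩ K) := fun x hx ↦ by
    by_cases hK : ∃ n, T^[n] x ∈ K
    · obtain ⟨n, hn⟩ := hK
      exact Or.inr (mem_iUnion.2 ⟨n, (mapsTo_T_survivors H).iterate n hx, hn⟩)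
    · exact Or.inl ⟨hx.1, fun n hn ↦ hn.elim (hx.2 n) fun h ↦ hK ⟨n, h⟩⟩
  calc dimH (survivors H)
      ≤ max (dimH (survivors (H ∪ K))) (dimH (⋃ n, T^[n] ⁻¹' (survivors H ∩ K))) :=
        (dimH_mono hsub).trans_eq (dimH_union _ _)
    _ ≤ max (dimH (survivors (H ∪ K))) (dimH (survivors H ∩ K)) :=
        max_le_max le_rfl (dimH_iUnion_preimage_iterate_T_le _)

theorem iterate_T_sub_iterate_T (h : ∀ n, T^[n] x ≤ 1 / 2 ↔ T^[n] y ≤ 1 / 2) (n : ℕ) :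
    T^[n] x - T^[n] y = 2 ^ n * (x - y) := by
  induction n with
  | zero => simp
  | succ n ih =>
    rw [Function.iterate_succ_apply', Function.iterate_succ_apply', pow_succ', mul_assoc, ← ih]
    rcases le_or_gt (T^[n] x) (1 / 2) with hx | hx
    · rw [T_of_le hx, T_of_le ((h n).1 hx), mul_sub]
    · rw [T_of_lt hx, T_of_lt (not_le.1 fun hy ↦ hx.not_ge ((h n).2 hy))]
      ring

theorem eq_of_forall_iterate_T_le_iff (hx : x ∈ Icc (0 : ℝ) 1) (hy : y ∈ Icc (0 : ℝ) 1)
    (h : ∀ n, T^[n] x ≤ 1 / 2 ↔ T^[n] y ≤ 1 / 2) : x = y := by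
  by_contra hne
  have hpos : 0 < |x - y| := abs_pos.2 (sub_ne_zero.2 hne)
  obtain ⟨n, hn⟩ := pow_unbounded_of_one_lt |x - y|⁻¹ (one_lt_two (α := ℝ))
  rw [inv_lt_iff_one_lt_mul₀ hpos] at hn
  have hle : |T^[n] x - T^[n] y| ≤ 1 := by
    simpa using abs_sub_le_of_le_of_le (mapsTo_T_Icc.iterate n hx).1 (mapsTo_T_Icc.iterate n hx).2
      (mapsTo_T_Icc.iterate n hy).1 (mapsTo_T_Icc.iterate n hy).2
  rw [iterate_T_sub_iterate_T h, abs_mul, abs_of_pos (by positivity)] at hle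
  exact hn.not_ge hle

section LargeHole

variable {α β : ℝ}

theorem lt_or_lt_of_mem_survivors_Icc (hx : x ∈ survivors (Icc α β)) : x < α ∨ β < x := by
  simpa only [mem_Icc, not_and_or, not_le] using not_mem_of_mem_survivors hx

theorem le_half_iff_T_le_half (hα : α ≤ 1 / 2) (hβ : 1 / 2 ≤ β)
    (hx : x ∈ survivors (Icc α β ∪ Icc (2 * β - 1) (2 * α))) : x ≤ 1 / 2 ↔ T x ≤ 1 / 2 := by
  have hmem := survivors_anti subset_union_left hx
  have hTx := mapsTo_T_survivors _ hx
  have htrap : ¬(2 * β - 1 ≤ T x ∧ T x ≤ 2 * α) := fun h ↦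
    not_mem_of_mem_survivors hTx (Or.inr h)
  have hside := lt_or_lt_of_mem_survivors_Icc (survivors_anti subset_union_left hTx)
  rcases lt_or_lt_of_mem_survivors_Icc hmem with h | h
  · rw [T_of_le (h.le.trans hα)] at htrap hside ⊢
    refine iff_of_true (h.le.trans hα) (hside.elim (fun h' ↦ h'.le.trans hα) fun h' ↦ ?_)
    exact absurd ⟨by linarith [hx.1.2], by linarith⟩ htrap
  · rw [T_of_lt (hβ.trans_lt h)] at htrap hside ⊢
    refine iff_of_false (hβ.trans_lt h).not_ge
      (hside.elim (fun h' ↦ ?_) fun h' ↦ (hβ.trans_lt h').not_ge)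
    exact absurd ⟨by linarith, by linarith [hx.1.1]⟩ htrap

-- An orbit avoiding both intervals stays on one side of `1 / 2`, like the fixed points `0` and `1`.
theorem survivors_union_Icc_subset (hα : α ≤ 1 / 2) (hβ : 1 / 2 ≤ β) :
    survivors (Icc α β ∪ Icc (2 * β - 1) (2 * α)) ⊆ {0, 1} := fun x hx ↦ by
  have hside (n : ℕ) : T^[n] x ≤ 1 / 2 ↔ x ≤ 1 / 2 := by
    induction n with
    | zero => rfl
    | succ n ih =>
      rw [← ih, Function.iterate_succ_apply']
      exact (le_half_iff_T_le_half hα hβ ((mapsTo_T_survivors _).iterate n hx)).symm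
  have hT0 (n : ℕ) : T^[n] 0 = 0 := Function.iterate_fixed (by simp [T_of_le]) n
  have hT1 (n : ℕ) : T^[n] 1 = 1 := Function.iterate_fixed (by norm_num [T]) n
  rcases le_or_gt x (1 / 2) with h | h
  · refine Or.inl (eq_of_forall_iterate_T_le_iff hx.1 (by simp) fun n ↦ ?_)
    rw [hside, hT0]
    norm_num [h]
  · refine Or.inr (eq_of_forall_iterate_T_le_iff hx.1 (by simp) fun n ↦ ?_)
    rw [hside, hT1]
    norm_num [h.not_ge]

theorem mapsTo_T_survivors_inter_Icc (hα : α ≤ 1 / 2) (hβ : 1 / 2 ≤ β) :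
    MapsTo T (survivors (Icc α β) ∩ Icc (2 * β - 1) (2 * α))
      (survivors (Icc α β) ∩ Icc (2 * β - 1) (2 * α)) := by
  rintro x ⟨hx, h1, h2⟩
  refine ⟨mapsTo_T_survivors _ hx, ?_⟩
  rcases lt_or_lt_of_mem_survivors_Icc hx with h | h
  · rw [T_of_le (by linarith)]; constructor <;> linarith [hx.1.1]
  · rw [T_of_lt (by linarith)]; constructor <;> linarith [hx.1.2]

theorem dist_le_half_mul_dist_T (hα : α ≤ 1 / 2) (hβ : 1 / 2 ≤ β)
    (hx : x ∈ survivors (Icc α β) ∩ Icc (2 * β - 1) (2 * α))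
    (hy : y ∈ survivors (Icc α β) ∩ Icc (2 * β - 1) (2 * α))
    (h : dist (T x) (T y) < 4 * (β - α) - 1) : dist x y ≤ 1 / 2 * dist (T x) (T y) := by
  obtain ⟨hxs, hx1, hx2⟩ := hx
  obtain ⟨hys, hy1, hy2⟩ := hy
  have hdouble (c : ℝ) : |x - y| ≤ 1 / 2 * |2 * x - c - (2 * y - c)| := by
    rw [sub_sub_sub_cancel_right, ← mul_sub, abs_mul, abs_two]
    linarith
  rw [Real.dist_eq, Real.dist_eq, abs_lt] at *
  rcases lt_or_lt_of_mem_survivors_Icc hxs with hx | hx <;>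
    rcases lt_or_lt_of_mem_survivors_Icc hys with hy | hy
  · rw [T_of_le (hx.le.trans hα), T_of_le (hy.le.trans hα)]
    simpa using hdouble 0
  · rw [T_of_le (hx.le.trans hα), T_of_lt (hβ.trans_lt hy)] at h
    linarith
  · rw [T_of_lt (hβ.trans_lt hx), T_of_le (hy.le.trans hα)] at h
    linarith
  · rw [T_of_lt (hβ.trans_lt hx), T_of_lt (hβ.trans_lt hy)]
    exact hdouble 1

theorem dimH_survivors_Icc_eq_zero (hα : α ≤ 1 / 2) (hβ : 1 / 2 ≤ β) (h : 1 / 4 < β - α) :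
    dimH (survivors (Icc α β)) = 0 := by
  have htrapped : dimH (survivors (Icc α β) ∩ Icc (2 * β - 1) (2 * α)) = 0 :=
    dimH_eq_zero_of_backward_contracting (c := 1 / 2)
      ((totallyBounded_Icc 0 1).subset fun _ hx ↦ hx.1.1)
      (show 0 < 4 * (β - α) - 1 by linarith) (by norm_num) (by norm_num)
      (mapsTo_T_survivors_inter_Icc hα hβ)
      fun _ hx _ hy ↦ dist_le_half_mul_dist_T hα hβ hx hy
  have hescaping : dimH (survivors (Icc α β ∪ Icc (2 * β - 1) (2 * α))) = 0 :=
    ((toFinite _).subset (survivors_union_Icc_subset hα hβ)).dimH_zero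
  simpa [htrapped, hescaping] using
    dimH_survivors_le_max (Icc α β) (Icc (2 * β - 1) (2 * α))

end LargeHole

end DoublingMap

section BinaryExpansions

theorem piW_eq_ofDigits (w : ℕ → Bool) :
    piW w = Real.ofDigits fun i ↦ if w i then (1 : Fin 2) else 0 := by
  refine tsum_congr fun i ↦ ?_
  by_cases h : w i <;> simp [Real.ofDigitsTerm, h]

theorem piW_mem_Icc (w : ℕ → Bool) : piW w ∈ Icc (0 : ℝ) 1 := by
  rw [piW_eq_ofDigits]
  exact ⟨Real.ofDigits_nonneg _, Real.ofDigits_le_one _⟩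

theorem piW_eq (w : ℕ → Bool) :
    piW w = ((if w 0 then 1 else 0) + piW fun i ↦ w (i + 1)) / 2 := by
  rw [piW_eq_ofDigits, piW_eq_ofDigits, Real.ofDigits_eq_sum_add_ofDigits _ 1]
  by_cases h : w 0 <;> simp [Real.ofDigitsTerm, h] <;> ring

/-- The value `π(u0^∞)` of a finite binary word `u`. -/
noncomputable def wordVal : List Bool → ℝ
  | [] => 0
  | b :: l => ((if b then 1 else 0) + wordVal l) / 2

theorem wordVal_mem_Icc (l : List Bool) : wordVal l ∈ Icc (0 : ℝ) 1 := by
  induction l with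
  | nil => simp [wordVal]
  | cons b l ih =>
    obtain ⟨h0, h1⟩ := ih
    cases b <;> simp only [wordVal, Bool.false_eq_true, if_true, if_false] <;>
      constructor <;> linarith

theorem WordLe.wordVal_le {u v : List Bool} (h : WordLe u v) : wordVal u ≤ wordVal v := by
  rcases h with rfl | h
  · exact le_rfl
  induction h with
  | nil => exact (wordVal_mem_Icc _).1
  | cons _ ih => simp only [wordVal]; linarith
  | @rel a l₁ b l₂ hab =>
    obtain ⟨rfl, rfl⟩ : a = false ∧ b = true := Bool.lt_iff.1 hab
    have h₁ := (wordVal_mem_Icc l₁).2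
    have h₂ := (wordVal_mem_Icc l₂).1
    simp only [wordVal, Bool.false_eq_true, if_true, if_false]
    linarith

theorem piW_wordThenPeriodic (u v : List Bool) :
    piW (wordThenPeriodic u v) = wordVal u + piW (periodize v) / 2 ^ u.length := by
  induction u with
  | nil =>
    have hnil : wordThenPeriodic [] v = periodize v := by funext i; simp [wordThenPeriodic]
    simp [wordVal, hnil]
  | cons b u ih =>
    have hshift : (fun i ↦ wordThenPeriodic (b :: u) v (i + 1)) = wordThenPeriodic u v := by
      funext i
      simp [wordThenPeriodic]
    have hhead : wordThenPeriodic (b :: u) v 0 = b := by simp [wordThenPeriodic]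
    rw [piW_eq, hshift, hhead, ih, wordVal, List.length_cons, pow_succ]
    ring

theorem wordThenPeriodic_self (w : List Bool) : wordThenPeriodic w w = periodize w := by
  funext i
  unfold wordThenPeriodic periodize
  split_ifs with h
  · rw [Nat.mod_eq_of_lt h]
  · rw [← Nat.mod_eq_sub_mod (not_lt.1 h)]

theorem wordVal_eq (w : List Bool) :
    wordVal w = piW (periodize w) - piW (periodize w) / 2 ^ w.length := by
  rw [eq_sub_iff_add_eq, ← piW_wordThenPeriodic, wordThenPeriodic_self]

theorem piW_wordThenPeriodic_eq (u v : List Bool) :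
    piW (wordThenPeriodic u v) =
      piW (periodize u) + (piW (periodize v) - piW (periodize u)) / 2 ^ u.length := by
  rw [piW_wordThenPeriodic, wordVal_eq]
  ring

theorem WordLe.piW_periodize_le {u v : List Bool} (h : WordLe u v) (hlen : u.length = v.length)
    (hv : v ≠ []) : piW (periodize u) ≤ piW (periodize v) := by
  have hpow : ((2 : ℝ) ^ v.length)⁻¹ < 1 :=
    inv_lt_one_of_one_lt₀ (one_lt_pow₀ one_lt_two (List.length_pos_iff.2 hv).ne')
  have hle := h.wordVal_le
  rw [wordVal_eq u, wordVal_eq v, hlen, div_eq_mul_inv, div_eq_mul_inv, ← mul_one_sub,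
    ← mul_one_sub] at hle
  exact le_of_mul_le_mul_right hle (sub_pos.2 hpow)

end BinaryExpansions

section BalancedWords

theorem periodize_periodic (w : List Bool) : Function.Periodic (periodize w) w.length := fun i ↦ by
  simp [periodize]

theorem rotate_eq_map_range' (w : List Bool) (k : ℕ) :
    w.rotate k = (List.range' k w.length).map (periodize w) := by
  refine List.ext_getElem (by simp) fun i h₁ h₂ ↦ ?_
  simp only [List.getElem_rotate, List.getElem_map, List.getElem_range', periodize, one_mul]
  rw [add_comm i k, List.getD_eq_getElem]

/-- The number of ones of `f` in the window of length `n` starting at `a`. -/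
def ones (f : ℕ → Bool) (a n : ℕ) : ℕ := ((List.range' a n).map f).count true

theorem ones_add (f : ℕ → Bool) (a m n : ℕ) : ones f a (m + n) = ones f a m + ones f (a + m) n := by
  rw [ones, ← List.range'_append_1, List.map_append, List.count_append, ones, ones]

theorem ones_one (f : ℕ → Bool) (a : ℕ) : ones f a 1 = if f a then 1 else 0 := by
  cases h : f a <;> simp [ones, h]

theorem ones_periodic {f : ℕ → Bool} {q : ℕ} (hf : Function.Periodic f q) (n : ℕ) :
    Function.Periodic (fun a ↦ ones f a n) q := fun a ↦ by
  simp only [ones, List.range'_eq_map_range, List.map_map]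
  congr 1
  refine List.map_congr_left fun j _ ↦ ?_
  simp only [Function.comp]
  rw [add_right_comm, hf]

theorem ones_periodize_length (w : List Bool) (a : ℕ) :
    ones (periodize w) a w.length = w.count true := by
  rw [ones, ← rotate_eq_map_range']
  exact (List.rotate_perm w a).count_eq true

theorem ones_periodize_compl (w : List Bool) (a : ℕ) {n : ℕ} (hn : n ≤ w.length) :
    ones (periodize w) a n + ones (periodize w) (a + n) (w.length - n) = w.count true := by
  rw [← ones_add, Nat.add_sub_cancel' hn, ones_periodize_length]

theorem isFactor_rotate (w : List Bool) (k : ℕ) {d n : ℕ} (h : d + n ≤ w.length) :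
    IsFactor ((List.range' (k + d) n).map (periodize w)) (w.rotate k) := by
  refine ⟨(List.range' k d).map (periodize w),
    (List.range' (k + (d + n)) (w.length - (d + n))).map (periodize w), ?_⟩
  rw [rotate_eq_map_range', ← List.map_append, ← List.map_append, List.range'_append_1,
    List.range'_append_1, Nat.add_sub_cancel' h]

/-- The amount by which the first `i` letters of `w^∞` have more ones than the density of ones of
`w` predicts, scaled by the length of `w` so as to be an integer. -/
def discrepancy (w : List Bool) (i : ℕ) : ℤ := w.length * ones (periodize w) 0 i - i * w.count true

theorem discrepancy_add (w : List Bool) (i n : ℕ) :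
    discrepancy w (i + n) =
      discrepancy w i + (w.length * ones (periodize w) i n - n * w.count true) := by
  rw [discrepancy, discrepancy, ones_add, zero_add]
  push_cast
  ring

theorem discrepancy_periodic (w : List Bool) : Function.Periodic (discrepancy w) w.length :=
  fun i ↦ by rw [discrepancy_add, ones_periodize_length, sub_self, add_zero]

theorem exists_forall_discrepancy_le {w : List Bool} (hw : w ≠ []) :
    ∃ j, ∀ i, discrepancy w j ≤ discrepancy w i := by
  have hpos := List.length_pos_iff.2 hw
  obtain ⟨j, -, hj⟩ := Finset.exists_min_image (Finset.range w.length) (discrepancy w)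
    ⟨0, Finset.mem_range.2 hpos⟩
  refine ⟨j, fun i ↦ ?_⟩
  rw [← (discrepancy_periodic w).map_mod_nat i]
  exact hj _ (Finset.mem_range.2 (Nat.mod_lt i hpos))

theorem sum_discrepancy_add_sub_discrepancy (w : List Bool) (n : ℕ) :
    ∑ k ∈ Finset.range w.length, (discrepancy w (k + n) - discrepancy w k) = 0 := by
  induction n with
  | zero => simp
  | succ n ih =>
    have htelescope := Finset.sum_range_sub (fun k ↦ discrepancy w (k + n)) w.length
    rw [add_comm w.length n, discrepancy_periodic w n, zero_add, sub_self] at htelescope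
    rw [← add_zero (0 : ℤ)]
    nth_rw 1 [← htelescope]
    rw [← ih, ← Finset.sum_add_distrib]
    refine Finset.sum_congr rfl fun k _ ↦ ?_
    rw [add_right_comm k 1 n, add_assoc k n 1]
    ring

namespace CyclBalanced

variable {w : List Bool}

theorem rotate (hw : CyclBalanced w) (k : ℕ) : CyclBalanced (w.rotate k) := fun j ↦ by
  rw [List.rotate_rotate]
  exact hw _

theorem abs_ones_sub_ones_le_of_same_rotation (hw : CyclBalanced w) (k : ℕ) {d d' n : ℕ}
    (h : d + n ≤ w.length) (h' : d' + n ≤ w.length) :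
    |(ones (periodize w) (k + d) n : ℤ) - ones (periodize w) (k + d') n| ≤ 1 := by
  have hd := isFactor_rotate w k h
  have hd' := isFactor_rotate w k h'
  exact abs_sub_le_iff.2 ⟨hw k _ _ hd hd' (by simp), hw k _ _ hd' hd (by simp)⟩

-- Two windows of length at most `w.length / 2` always fit into a common rotation of `w`.
theorem abs_ones_add_sub_ones_le_of_two_mul_le (hw : CyclBalanced w) {n : ℕ}
    (hn : 2 * n ≤ w.length) (i d : ℕ) :
    |(ones (periodize w) (i + d) n : ℤ) - ones (periodize w) i n| ≤ 1 := by
  rcases eq_or_ne w [] with rfl | hne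
  · simp [show n = 0 by simpa using hn, ones]
  have hper := ones_periodic (periodize_periodic w) n
  rw [← (hper.const_add i).map_mod_nat d]
  have hd := Nat.mod_lt d (List.length_pos_iff.2 hne)
  generalize d % w.length = d at hd
  by_cases hfit : d + n ≤ w.length
  · exact hw.abs_ones_sub_ones_le_of_same_rotation i (d' := 0) hfit (by omega)
  · have h := hw.abs_ones_sub_ones_le_of_same_rotation (i + d) (d := 0) (d' := w.length - d)
      (n := n) (by omega) (by omega)
    have hwrap : ones (periodize w) (i + w.length) n = ones (periodize w) i n := hper i
    rwa [add_zero, show i + d + (w.length - d) = i + w.length by omega, hwrap] at h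

theorem abs_ones_add_sub_ones_le (hw : CyclBalanced w) {n : ℕ} (hn : n ≤ w.length) (i d : ℕ) :
    |(ones (periodize w) (i + d) n : ℤ) - ones (periodize w) i n| ≤ 1 := by
  by_cases h : 2 * n ≤ w.length
  · exact hw.abs_ones_add_sub_ones_le_of_two_mul_le h i d
  · have hcompl :=
      hw.abs_ones_add_sub_ones_le_of_two_mul_le (n := w.length - n) (by omega) (i + n) d
    have h₁ := ones_periodize_compl w (i + d) hn
    have h₂ := ones_periodize_compl w i hn
    rw [add_right_comm i n d] at hcompl
    rw [abs_le] at hcompl ⊢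
    omega

theorem ones_sub_ones_le (hw : CyclBalanced w) {n : ℕ} (hn : n ≤ w.length) (i j : ℕ) :
    (ones (periodize w) i n : ℤ) - ones (periodize w) j n ≤ 1 := by
  rcases le_total j i with h | h
  · obtain ⟨d, rfl⟩ := Nat.exists_eq_add_of_le h
    exact (abs_sub_le_iff.1 (hw.abs_ones_add_sub_ones_le hn j d)).1
  · obtain ⟨d, rfl⟩ := Nat.exists_eq_add_of_le h
    exact (abs_sub_le_iff.1 (hw.abs_ones_add_sub_ones_le hn i d)).2

theorem discrepancy_add_sub_discrepancy_lt (hw : CyclBalanced w) (hne : w ≠ []) (i n : ℕ) :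
    discrepancy w (i + n) - discrepancy w i < w.length := by
  have hpos := List.length_pos_iff.2 hne
  rw [← ((discrepancy_periodic w).const_add i).map_mod_nat n]
  have hn := (Nat.mod_lt n hpos).le
  generalize n % w.length = n at hn
  by_contra! hle
  have hincr (k : ℕ) : discrepancy w (i + n) - discrepancy w i - w.length ≤
      discrepancy w (k + n) - discrepancy w k := by
    have h := mul_le_mul_of_nonneg_left (hw.ones_sub_ones_le hn i k) (Nat.cast_nonneg w.length)
    rw [discrepancy_add, discrepancy_add]
    linarith
  have hnonneg (k : ℕ) : 0 ≤ discrepancy w (k + n) - discrepancy w k := by linarith [hincr k]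
  have hzero := (Finset.sum_eq_zero_iff_of_nonneg fun k _ ↦ hnonneg k).1
    (sum_discrepancy_add_sub_discrepancy w n) (i % w.length)
    (Finset.mem_range.2 (Nat.mod_lt i hpos))
  rw [(discrepancy_periodic w).map_mod_nat,
    ((discrepancy_periodic w).add_const n).map_mod_nat] at hzero
  omega

theorem discrepancy_sub_discrepancy_lt (hw : CyclBalanced w) (hne : w ≠ []) (i j : ℕ) :
    discrepancy w i - discrepancy w j < w.length := by
  have hle : j ≤ i + j * w.length :=
    (Nat.le_mul_of_pos_right j (List.length_pos_iff.2 hne)).trans (Nat.le_add_left _ _)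
  obtain ⟨n, hn⟩ := Nat.exists_eq_add_of_le hle
  have hshift : discrepancy w (i + j * w.length) = discrepancy w i :=
    (discrepancy_periodic w).nat_mul j i
  rw [← hshift, hn]
  exact hw.discrepancy_add_sub_discrepancy_lt hne j n

theorem periodize_eq_decide (hw : CyclBalanced w) (hne : w ≠ []) {j : ℕ}
    (hj : ∀ i, discrepancy w j ≤ discrepancy w i) (i : ℕ) :
    periodize w i = decide (discrepancy w i - discrepancy w j < w.count true) := by
  have hstep := discrepancy_add w i 1
  have hmin := hj (i + 1)
  have hlt := hw.discrepancy_sub_discrepancy_lt hne (i + 1) j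
  rw [ones_one] at hstep
  cases h : periodize w i <;> simp [h] at hstep ⊢ <;> linarith

end CyclBalanced

/-- The coding of the orbit of `e` under the rotation by `-p` of the discrete circle `ZMod q`, with
respect to the arc of the first `p` residues. -/
def rotWord (p : ℕ) {q : ℕ} (e : ZMod q) (i : ℕ) : Bool := decide ((e - i * p).val < p)

theorem CyclBalanced.exists_periodize_eq_rotWord {w : List Bool} (hw : CyclBalanced w)
    (hne : w ≠ []) : ∃ e : ZMod w.length, periodize w = rotWord (w.count true) e := by
  have : NeZero w.length := ⟨(List.length_pos_iff.2 hne).ne'⟩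
  obtain ⟨j, hj⟩ := exists_forall_discrepancy_le hne
  refine ⟨((-discrepancy w j : ℤ) : ZMod w.length), funext fun i ↦ ?_⟩
  have hcast : ((-discrepancy w j : ℤ) : ZMod w.length) - i * w.count true =
      ((discrepancy w i - discrepancy w j : ℤ) : ZMod w.length) := by
    simp [discrepancy, sub_eq_add_neg, add_comm]
  have hval : (((-discrepancy w j : ℤ) : ZMod w.length) - i * w.count true).val =
      discrepancy w i - discrepancy w j := by
    rw [hcast, ZMod.val_intCast, Int.emod_eq_of_lt (sub_nonneg.2 (hj i))
      (hw.discrepancy_sub_discrepancy_lt hne i j)]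
  rw [rotWord, hw.periodize_eq_decide hne hj, ← hval]
  exact decide_eq_decide.2 Nat.cast_lt

end BalancedWords

section RotationOrbit

/-- The point of `[0, 1]` whose binary expansion codes the orbit of `e` under the rotation by `-p`.
For `p` and `q` coprime, these points form a single periodic orbit of the doubling map, on which the
map acts as the rotation. -/
noncomputable def rotPoint (p : ℕ) {q : ℕ} (e : ZMod q) : ℝ := piW (rotWord p e)

/-- The left endpoint of the central gap of the rotation orbit, coded by the residue `p`. -/
noncomputable def leftPt (p q : ℕ) : ℝ := rotPoint p (p : ZMod q)

/-- The right endpoint of the central gap of the rotation orbit, coded by the residue `p - 1`. -/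
noncomputable def rightPt (p q : ℕ) : ℝ := rotPoint p ((p : ZMod q) - 1)

variable {p q : ℕ}

theorem rotPoint_mem_Icc (p : ℕ) (e : ZMod q) : rotPoint p e ∈ Icc (0 : ℝ) 1 := piW_mem_Icc _

theorem rotWord_zero (p : ℕ) (e : ZMod q) : rotWord p e 0 = decide (e.val < p) := by
  simp [rotWord]

theorem rotWord_add (p : ℕ) (e : ZMod q) (i k : ℕ) :
    rotWord p e (i + k) = rotWord p (e - (k : ZMod q) * (p : ZMod q)) i := by
  rw [rotWord, rotWord, Nat.cast_add, add_mul, add_comm ((i : ZMod q) * (p : ZMod q)),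
    sub_add_eq_sub_sub]

theorem two_mul_rotPoint (p : ℕ) (e : ZMod q) :
    2 * rotPoint p e = (if e.val < p then 1 else 0) + rotPoint p (e - (p : ZMod q)) := by
  have hshift : (fun i ↦ rotWord p e (i + 1)) = rotWord p (e - (p : ZMod q)) := funext fun i ↦ by
    rw [rotWord_add, Nat.cast_one, one_mul]
  rw [rotPoint, piW_eq, hshift, rotWord_zero, rotPoint]
  simp only [decide_eq_true_eq]
  ring

theorem two_mul_rotPoint_of_val_lt {e : ZMod q} (he : e.val < p) :
    2 * rotPoint p e = 1 + rotPoint p (e - (p : ZMod q)) := by rw [two_mul_rotPoint, if_pos he]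

theorem two_mul_rotPoint_of_le_val {e : ZMod q} (he : p ≤ e.val) :
    2 * rotPoint p e = rotPoint p (e - (p : ZMod q)) := by
  rw [two_mul_rotPoint, if_neg he.not_gt, zero_add]

theorem val_natCast_sub_one (hp : 0 < p) (hpq : p < q) : ((p : ZMod q) - 1).val = p - 1 := by
  rw [← Nat.cast_pred hp, ZMod.val_natCast_of_lt (by omega)]

theorem two_mul_leftPt (hpq : p < q) : 2 * leftPt p q = rotPoint p (0 : ZMod q) := by
  rw [leftPt, two_mul_rotPoint_of_le_val (ZMod.val_natCast_of_lt hpq).ge, sub_self]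

theorem two_mul_rightPt (hp : 0 < p) (hpq : p < q) :
    2 * rightPt p q = 1 + rotPoint p (-1 : ZMod q) := by
  rw [rightPt, two_mul_rotPoint_of_val_lt (by rw [val_natCast_sub_one hp hpq]; omega),
    sub_sub_cancel_left]

theorem two_mul_rotPoint_zero (hp : 0 < p) :
    2 * rotPoint p (0 : ZMod q) = 1 + rotPoint p (-(p : ZMod q)) := by
  rw [two_mul_rotPoint_of_val_lt (by rwa [ZMod.val_zero]), zero_sub]

theorem rotPoint_neg_eq (hp : 0 < p) (hpq : p < q) :
    rotPoint p (-(p : ZMod q)) = 4 * leftPt p q - 1 := by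
  linarith [two_mul_leftPt hpq, two_mul_rotPoint_zero (q := q) hp]

theorem leftPt_le_half (hpq : p < q) : leftPt p q ≤ 1 / 2 := by
  linarith [two_mul_leftPt hpq, (rotPoint_mem_Icc p (0 : ZMod q)).2]

theorem natCast_mul_natCast_ne_zero (hco : p.Coprime q) {i : ℕ} (hi₀ : 0 < i) (hi : i < q) :
    (i : ZMod q) * (p : ZMod q) ≠ 0 := by
  rw [← Nat.cast_mul, Ne, ZMod.natCast_eq_zero_iff]
  exact fun h ↦ hi.not_ge (Nat.le_of_dvd hi₀ (hco.symm.dvd_of_dvd_mul_right h))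

variable [NeZero q]

theorem natCast_pred_eq_neg_one : ((q - 1 : ℕ) : ZMod q) = -1 := by
  rw [Nat.cast_pred (NeZero.pos q), ZMod.natCast_self, zero_sub]

theorem val_neg_one : (-1 : ZMod q).val = q - 1 := by
  rw [← natCast_pred_eq_neg_one, ZMod.val_natCast_of_lt (Nat.sub_one_lt (NeZero.ne q))]

theorem exists_natCast_mul_eq (hco : p.Coprime q) (e : ZMod q) :
    ∃ i < q, (i : ZMod q) * (p : ZMod q) = e := by
  refine ⟨(e * (p : ZMod q)⁻¹).val, ZMod.val_lt _, ?_⟩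
  rw [ZMod.natCast_zmod_val, mul_assoc, mul_comm _ (p : ZMod q), ZMod.coe_mul_inv_eq_one p hco,
    mul_one]

theorem val_add_one_of_ne {e : ZMod q} (he : e ≠ -1) : (e + 1).val = e.val + 1 := by
  have hcast : e + 1 = ((e.val + 1 : ℕ) : ZMod q) := by simp
  rw [hcast, ZMod.val_natCast_of_lt]
  refine lt_of_le_of_ne (ZMod.val_lt e) fun h ↦ he (eq_neg_of_add_eq_zero_left ?_)
  rw [hcast, h, ZMod.natCast_self]

theorem two_mul_rotPoint_sub_rotPoint_add_one {e : ZMod q} (he : e ≠ -1)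
    (he' : e ≠ (p : ZMod q) - 1) :
    2 * (rotPoint p e - rotPoint p (e + 1)) =
      rotPoint p (e - (p : ZMod q)) - rotPoint p (e - (p : ZMod q) + 1) := by
  have hval : e.val < p ↔ (e + 1).val < p := by
    have hne : (e + 1).val ≠ p := fun h ↦ he' <| by
      rw [← h, ZMod.natCast_zmod_val, add_sub_cancel_right]
    rw [val_add_one_of_ne he] at hne ⊢
    omega
  rw [mul_sub, two_mul_rotPoint, two_mul_rotPoint]
  simp only [hval]
  rw [add_sub_add_left_eq_sub, sub_add_eq_add_sub]

-- The gap `(z_{(i+1)p}, z_{(i+1)p-1})` of the rotation orbit is mapped onto the central one by the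
-- `i`-th iterate of the doubling map.
theorem rotPoint_mul_sub_one_sub_rotPoint_mul (hco : p.Coprime q) {i : ℕ} (hi : i + 1 < q) :
    rotPoint p (((i + 1 : ℕ) : ZMod q) * (p : ZMod q) - 1) -
        rotPoint p (((i + 1 : ℕ) : ZMod q) * (p : ZMod q)) =
      (rightPt p q - leftPt p q) / 2 ^ i := by
  induction i with
  | zero => simp [leftPt, rightPt]
  | succ i ih =>
    set e : ZMod q := ((i + 1 + 1 : ℕ) : ZMod q) * (p : ZMod q) - 1 with he
    have hsucc : e + 1 = ((i + 1 + 1 : ℕ) : ZMod q) * (p : ZMod q) := sub_add_cancel _ _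
    have hsub : e - (p : ZMod q) = ((i + 1 : ℕ) : ZMod q) * (p : ZMod q) - 1 := by
      rw [he, Nat.cast_succ (i + 1)]
      ring
    have hne : e ≠ -1 := fun h ↦ by
      rw [eq_neg_iff_add_eq_zero, hsucc] at h
      exact natCast_mul_natCast_ne_zero hco (Nat.succ_pos _) hi h
    have hne' : e ≠ (p : ZMod q) - 1 := fun h ↦ by
      rw [← sub_eq_zero, sub_sub_eq_add_sub, ← sub_add_eq_add_sub, hsub, sub_add_cancel] at h
      exact natCast_mul_natCast_ne_zero hco i.succ_pos (by omega) h
    have hgap := two_mul_rotPoint_sub_rotPoint_add_one hne hne'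
    rw [hsucc, hsub, sub_add_cancel, ih (by omega)] at hgap
    rw [pow_succ, ← div_div, ← hgap]
    ring

theorem two_mul_rotPoint_neg_one (hpq : p < q) :
    2 * rotPoint p (-1 : ZMod q) = rotPoint p (-(p : ZMod q) - 1) := by
  rw [two_mul_rotPoint_of_le_val (by rw [val_neg_one]; omega)]
  congr 1
  ring

theorem rightPt_sub_leftPt_eq (hp : 0 < p) (hpq : p < q) (hco : p.Coprime q) :
    rightPt p q - leftPt p q = 1 / 4 + (rightPt p q - leftPt p q) / 2 ^ q := by
  have hgap := rotPoint_mul_sub_one_sub_rotPoint_mul hco (show q - 2 + 1 < q by omega)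
  rw [show q - 2 + 1 = q - 1 by omega, natCast_pred_eq_neg_one, neg_one_mul] at hgap
  have hpow : (2 : ℝ) ^ q = 2 ^ (q - 2) * 4 := by
    rw [← pow_sub_mul_pow 2 (show 2 ≤ q by omega)]
    norm_num
  rw [hpow, ← div_div]
  linarith [two_mul_rightPt hp hpq, two_mul_rotPoint_neg_one hpq, rotPoint_neg_eq hp hpq]

theorem one_fourth_lt_rightPt_sub_leftPt (hp : 0 < p) (hpq : p < q) (hco : p.Coprime q) :
    1 / 4 < rightPt p q - leftPt p q := by
  have hpow : ((2 : ℝ) ^ q)⁻¹ < 1 := inv_lt_one_of_one_lt₀ (one_lt_pow₀ one_lt_two (NeZero.ne q))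
  have heq := rightPt_sub_leftPt_eq hp hpq hco
  have hpos : 0 < rightPt p q - leftPt p q := by
    refine pos_of_mul_pos_left (b := 1 - ((2 : ℝ) ^ q)⁻¹) ?_ (sub_pos.2 hpow).le
    rw [mul_one_sub, ← div_eq_mul_inv]
    linarith
  have : 0 < (rightPt p q - leftPt p q) / 2 ^ q := by positivity
  linarith

theorem rotPoint_add_one_lt (hp : 0 < p) (hpq : p < q) (hco : p.Coprime q) {e : ZMod q}
    (he : e ≠ -1) : rotPoint p (e + 1) < rotPoint p e := by
  obtain ⟨i, hi, hie⟩ := exists_natCast_mul_eq hco (e + 1)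
  obtain ⟨i, rfl⟩ : ∃ j, i = j + 1 := Nat.exists_eq_succ_of_ne_zero fun h ↦ he <| by
    rw [h, Nat.cast_zero, zero_mul] at hie
    exact eq_neg_of_add_eq_zero_left hie.symm
  have hgap := rotPoint_mul_sub_one_sub_rotPoint_mul hco hi
  rw [hie, add_sub_cancel_right] at hgap
  have hpos : 0 < (rightPt p q - leftPt p q) / 2 ^ i :=
    div_pos (by linarith [one_fourth_lt_rightPt_sub_leftPt hp hpq hco]) (by positivity)
  linarith

theorem rotPoint_le_of_val_le (hp : 0 < p) (hpq : p < q) (hco : p.Coprime q) {e f : ZMod q}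
    (h : e.val ≤ f.val) : rotPoint p f ≤ rotPoint p e := by
  have hanti : AntitoneOn (fun n : ℕ ↦ rotPoint p (n : ZMod q)) (Iio q) := by
    refine antitoneOn_of_succ_le ordConnected_Iio fun n _ _ hn ↦ ?_
    have hne : (n : ZMod q) ≠ -1 := fun h ↦ by
      rw [eq_neg_iff_add_eq_zero, ← Nat.cast_succ, ZMod.natCast_eq_zero_iff] at h
      exact (Nat.le_of_dvd n.succ_pos h).not_gt hn
    simpa using (rotPoint_add_one_lt hp hpq hco hne).le
  simpa using hanti (ZMod.val_lt e) (ZMod.val_lt f) h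

theorem rightPt_le_rotPoint (hp : 0 < p) (hpq : p < q) (hco : p.Coprime q) {e : ZMod q}
    (he : e.val < p) : rightPt p q ≤ rotPoint p e :=
  rotPoint_le_of_val_le hp hpq hco (by rw [val_natCast_sub_one hp hpq]; omega)

theorem rotPoint_le_leftPt (hp : 0 < p) (hpq : p < q) (hco : p.Coprime q) {e : ZMod q}
    (he : p ≤ e.val) : rotPoint p e ≤ leftPt p q :=
  rotPoint_le_of_val_le hp hpq hco (by rwa [ZMod.val_natCast_of_lt hpq])

theorem rightPt_le_two_mul_leftPt (hp : 0 < p) (hpq : p < q) (hco : p.Coprime q) :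
    rightPt p q ≤ 2 * leftPt p q := by
  rw [two_mul_leftPt hpq]
  exact rightPt_le_rotPoint hp hpq hco (by rwa [ZMod.val_zero])

theorem two_mul_rightPt_sub_one_le_leftPt (hp : 0 < p) (hpq : p < q) (hco : p.Coprime q) :
    2 * rightPt p q - 1 ≤ leftPt p q := by
  rw [two_mul_rightPt hp hpq, add_sub_cancel_left]
  exact rotPoint_le_leftPt hp hpq hco (by rw [val_neg_one]; omega)

theorem half_lt_rightPt (hp : 0 < p) (hpq : p < q) (hco : p.Coprime q) : 1 / 2 < rightPt p q := by
  have hne : -(p : ZMod q) - 1 ≠ -1 := by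
    rw [Ne, sub_eq_neg_self, neg_eq_zero]
    simpa using natCast_mul_natCast_ne_zero hco one_pos (by omega)
  have hlt := rotPoint_add_one_lt hp hpq hco hne
  linarith [two_mul_rightPt hp hpq, two_mul_rotPoint_neg_one hpq,
    (rotPoint_mem_Icc p (-(p : ZMod q) - 1 + 1)).1]

theorem rightPt_le_three_fourths (hp : 0 < p) (hpq : p < q) : rightPt p q ≤ 3 / 4 := by
  linarith [two_mul_rightPt hp hpq, two_mul_rotPoint_neg_one hpq,
    (rotPoint_mem_Icc p (-p - 1 : ZMod q)).2]

end RotationOrbit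

section FirstReturn

/-- The hole `(π(st^∞), π(ts^∞))` in terms of the central gap of the rotation orbit. -/
def hole (p q : ℕ) : Set ℝ := Ioo (rightPt p q - 1 / 4) (leftPt p q + 1 / 4)

/-- The two endpoints of the central gap of the rotation orbit. -/
noncomputable def endPt (p q : ℕ) : Fin 2 → ℝ := ![leftPt p q, rightPt p q]

/-- The inverse branches of the first return map of `T` to the closed central gap of the rotation
orbit: the contractions of ratio `(2 ^ q)⁻¹` fixing either endpoint of the gap. -/
noncomputable def branch (p q : ℕ) (i : Fin 2) (y : ℝ) : ℝ :=
  endPt p q i + (2 ^ q)⁻¹ * (y - endPt p q i)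

variable {p q : ℕ} {y : ℝ}

theorem lipschitzWith_branch (p q : ℕ) (i : Fin 2) :
    LipschitzWith (2 ^ q)⁻¹ (branch p q i) := LipschitzWith.of_dist_le_mul fun x y ↦ by
  rw [Real.dist_eq, Real.dist_eq, branch, branch, add_sub_add_left_eq_sub, ← mul_sub,
    sub_sub_sub_cancel_right, abs_mul, abs_of_pos (by positivity)]
  simp

theorem branch_zero (p q : ℕ) (y : ℝ) :
    branch p q 0 y = leftPt p q + (2 ^ q)⁻¹ * (y - leftPt p q) := rfl

theorem branch_one (p q : ℕ) (y : ℝ) :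
    branch p q 1 y = rightPt p q + (2 ^ q)⁻¹ * (y - rightPt p q) := rfl

variable [NeZero q]

theorem not_mem_Ioo_and_T_eq_of_mem_Icc (hp : 0 < p) (hpq : p < q) (hco : p.Coprime q)
    {e : ZMod q} (he₀ : e ≠ 0) (hep : e ≠ p) {x : ℝ}
    (hx : x ∈ Icc (rotPoint p e) (rotPoint p (e - 1))) :
    x ∉ Ioo (leftPt p q) (rightPt p q) ∧
      T x = rotPoint p (e - (p : ZMod q)) + 2 * (x - rotPoint p e) := by
  rcases lt_or_ge e.val p with he | he
  · have hR : rightPt p q ≤ x := (rightPt_le_rotPoint hp hpq hco he).trans hx.1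
    refine ⟨fun h ↦ h.2.not_ge hR, ?_⟩
    rw [T_of_lt ((half_lt_rightPt hp hpq hco).trans_le hR)]
    linarith [two_mul_rotPoint_of_val_lt he]
  · have hpred : p ≤ (e - 1).val := by
      have hne : e - 1 ≠ -1 := fun h ↦ he₀ (by simpa [sub_eq_iff_eq_add] using h)
      have hval := val_add_one_of_ne hne
      rw [sub_add_cancel] at hval
      have hne' : e.val ≠ p := fun h ↦ hep (by rw [← h, ZMod.natCast_zmod_val])
      omega
    have hL : x ≤ leftPt p q := hx.2.trans (rotPoint_le_leftPt hp hpq hco hpred)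
    refine ⟨fun h ↦ h.1.not_ge hL, ?_⟩
    rw [T_of_le (hL.trans (leftPt_le_half hpq))]
    linarith [two_mul_rotPoint_of_le_val he]

theorem not_mem_Ioo_and_T_rotPoint_mul_add (hp : 0 < p) (hpq : p < q) (hco : p.Coprime q)
    {i : ℕ} (hi : i + 2 < q) {w : ℝ} (hw : w ∈ Icc 0 (rightPt p q - leftPt p q)) :
    rotPoint p (((i + 2 : ℕ) : ZMod q) * (p : ZMod q)) + w / 2 ^ (i + 1) ∉
        Ioo (leftPt p q) (rightPt p q) ∧
      T (rotPoint p (((i + 2 : ℕ) : ZMod q) * (p : ZMod q)) + w / 2 ^ (i + 1)) =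
        rotPoint p (((i + 1 : ℕ) : ZMod q) * (p : ZMod q)) + w / 2 ^ i := by
  have hgap := rotPoint_mul_sub_one_sub_rotPoint_mul hco (i := i + 1) hi
  have hsub : ((i + 2 : ℕ) : ZMod q) * (p : ZMod q) - (p : ZMod q) =
      ((i + 1 : ℕ) : ZMod q) * (p : ZMod q) := by
    push_cast
    ring
  have hep : ((i + 2 : ℕ) : ZMod q) * (p : ZMod q) ≠ p := fun h ↦
    natCast_mul_natCast_ne_zero hco i.succ_pos (by omega) (hsub.symm.trans (sub_eq_zero.2 h))
  have hnonneg : 0 ≤ w / 2 ^ (i + 1) := div_nonneg hw.1 (by positivity)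
  have hle : w / 2 ^ (i + 1) ≤ (rightPt p q - leftPt p q) / 2 ^ (i + 1) := by
    gcongr
    exact hw.2
  obtain ⟨hnot, hT⟩ := not_mem_Ioo_and_T_eq_of_mem_Icc hp hpq hco
    (natCast_mul_natCast_ne_zero hco (Nat.succ_pos _) hi) hep
    (x := rotPoint p (((i + 2 : ℕ) : ZMod q) * (p : ZMod q)) + w / 2 ^ (i + 1))
    ⟨by linarith, by linarith⟩
  refine ⟨hnot, ?_⟩
  rw [hT, hsub, pow_succ]
  ring

theorem iterate_T_rotPoint_mul_add (hp : 0 < p) (hpq : p < q) (hco : p.Coprime q) {w : ℝ}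
    (hw : w ∈ Icc 0 (rightPt p q - leftPt p q)) {i : ℕ} (hi : i + 1 < q) :
    T^[i] (rotPoint p (((i + 1 : ℕ) : ZMod q) * (p : ZMod q)) + w / 2 ^ i) = leftPt p q + w := by
  induction i with
  | zero => simp [leftPt]
  | succ i ih =>
    rw [Function.iterate_succ_apply, (not_mem_Ioo_and_T_rotPoint_mul_add hp hpq hco hi hw).2,
      ih (by omega)]

theorem iterate_T_rotPoint_mul_add_not_mem_Ioo (hp : 0 < p) (hpq : p < q) (hco : p.Coprime q)
    {w : ℝ} (hw : w ∈ Icc 0 (rightPt p q - leftPt p q)) {i m : ℕ} (hi : i + 1 < q) (hm : m < i) :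
    T^[m] (rotPoint p (((i + 1 : ℕ) : ZMod q) * (p : ZMod q)) + w / 2 ^ i) ∉
      Ioo (leftPt p q) (rightPt p q) := by
  induction i generalizing m with
  | zero => exact absurd hm m.not_lt_zero
  | succ i ih =>
    obtain ⟨hnot, hT⟩ := not_mem_Ioo_and_T_rotPoint_mul_add hp hpq hco hi hw
    cases m with
    | zero => exact hnot
    | succ m =>
      rw [Function.iterate_succ_apply, hT]
      exact ih (by omega) (Nat.succ_lt_succ_iff.1 hm)

theorem inv_two_pow_mul_rightPt_sub_leftPt (hp : 0 < p) (hpq : p < q) (hco : p.Coprime q) :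
    (2 ^ q)⁻¹ * (rightPt p q - leftPt p q) = rightPt p q - leftPt p q - 1 / 4 := by
  rw [← div_eq_inv_mul]
  linarith [rightPt_sub_leftPt_eq hp hpq hco]

theorem branch_zero_mem_Icc (hp : 0 < p) (hpq : p < q) (hco : p.Coprime q)
    (hy : y ∈ Icc (leftPt p q) (rightPt p q)) :
    branch p q 0 y ∈ Icc (leftPt p q) (rightPt p q - 1 / 4) := by
  have hr : (0 : ℝ) ≤ (2 ^ q)⁻¹ := by positivity
  have hlow := mul_nonneg hr (sub_nonneg.2 hy.1)
  have hup := mul_le_mul_of_nonneg_left (sub_le_sub_right hy.2 (leftPt p q)) hr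
  rw [inv_two_pow_mul_rightPt_sub_leftPt hp hpq hco] at hup
  rw [branch_zero]
  constructor <;> linarith

theorem branch_one_mem_Icc (hp : 0 < p) (hpq : p < q) (hco : p.Coprime q)
    (hy : y ∈ Icc (leftPt p q) (rightPt p q)) :
    branch p q 1 y ∈ Icc (leftPt p q + 1 / 4) (rightPt p q) := by
  have hr : (0 : ℝ) ≤ (2 ^ q)⁻¹ := by positivity
  have hlow := mul_nonneg hr (sub_nonneg.2 hy.2)
  have hup := mul_le_mul_of_nonneg_left (sub_le_sub_left hy.1 (rightPt p q)) hr
  rw [inv_two_pow_mul_rightPt_sub_leftPt hp hpq hco] at hup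
  rw [branch_one]
  constructor <;> linarith

theorem branch_not_mem_hole (hp : 0 < p) (hpq : p < q) (hco : p.Coprime q)
    (hy : y ∈ Icc (leftPt p q) (rightPt p q)) : ∀ i, branch p q i y ∉ hole p q :=
  Fin.forall_fin_two.2 ⟨fun h ↦ h.1.not_ge (branch_zero_mem_Icc hp hpq hco hy).2,
    fun h ↦ h.2.not_ge (branch_one_mem_Icc hp hpq hco hy).1⟩

theorem exists_branch_eq (hp : 0 < p) (hpq : p < q) (hco : p.Coprime q) {x : ℝ}
    (hx : x ∈ Icc (leftPt p q) (rightPt p q)) (hhole : x ∉ hole p q) :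
    ∃ i, ∃ y ∈ Icc (leftPt p q) (rightPt p q), branch p q i y = x := by
  have hinv (u : ℝ) : u + (2 ^ q)⁻¹ * (u + 2 ^ q * (x - u) - u) = x := by
    rw [add_sub_cancel_left, inv_mul_cancel_left₀ (by positivity), add_sub_cancel]
  have hscale : 2 ^ q * (rightPt p q - leftPt p q - 1 / 4) = rightPt p q - leftPt p q := by
    rw [← inv_two_pow_mul_rightPt_sub_leftPt hp hpq hco, mul_inv_cancel_left₀ (by positivity)]
  have hpow : (0 : ℝ) ≤ 2 ^ q := by positivity
  rw [hole, mem_Ioo, not_and_or, not_lt, not_lt] at hhole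
  rcases hhole with h | h
  · refine ⟨0, leftPt p q + 2 ^ q * (x - leftPt p q), ?_, hinv _⟩
    have hlow := mul_nonneg hpow (sub_nonneg.2 hx.1)
    have hup := mul_le_mul_of_nonneg_left (sub_le_sub_right h (leftPt p q)) hpow
    rw [sub_right_comm, hscale] at hup
    constructor <;> linarith
  · refine ⟨1, rightPt p q + 2 ^ q * (x - rightPt p q), ?_, hinv _⟩
    have hlow := mul_nonneg hpow (sub_nonneg.2 hx.2)
    have hup := mul_le_mul_of_nonneg_left (sub_le_sub_left h (rightPt p q)) hpow
    rw [← sub_sub, hscale] at hup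
    constructor <;> linarith

theorem T_branch_not_mem_Ioo_and_T_T_branch (hp : 0 < p) (hpq : p < q) (hco : p.Coprime q)
    (hy : y ∈ Icc (leftPt p q) (rightPt p q)) (i : Fin 2) :
    T (branch p q i y) ∉ Ioo (leftPt p q) (rightPt p q) ∧
      T (T (branch p q i y)) =
        4 * leftPt p q - 1 + 4 * ((2 ^ q)⁻¹ * (y - leftPt p q)) := by
  have hhalf := half_lt_rightPt hp hpq hco
  have hhalf' := leftPt_le_half (p := p) hpq
  have hR := rightPt_le_two_mul_leftPt hp hpq hco
  have hL := two_mul_rightPt_sub_one_le_leftPt hp hpq hco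
  fin_cases i
  · obtain ⟨hlow, hup⟩ := branch_zero_mem_Icc hp hpq hco hy
    have hle : branch p q 0 y ≤ 1 / 2 := hup.trans (by linarith)
    simp only [Fin.zero_eta, T_of_le hle]
    refine ⟨fun h ↦ by linarith [h.2], ?_⟩
    rw [T_of_lt (by linarith), branch_zero]
    ring
  · obtain ⟨hlow, hup⟩ := branch_one_mem_Icc hp hpq hco hy
    have hlt : 1 / 2 < branch p q 1 y := by linarith
    simp only [Fin.mk_one, T_of_lt hlt]
    refine ⟨fun h ↦ by linarith [h.1], ?_⟩
    rw [T_of_le (by linarith), branch_one]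
    linarith [inv_two_pow_mul_rightPt_sub_leftPt hp hpq hco]

theorem T_T_branch (hp : 0 < p) (hpq : p < q) (hco : p.Coprime q)
    (hy : y ∈ Icc (leftPt p q) (rightPt p q)) (i : Fin 2) :
    T (T (branch p q i y)) = rotPoint p (((q - 2 + 1 : ℕ) : ZMod q) * (p : ZMod q)) +
      (y - leftPt p q) / 2 ^ (q - 2) := by
  have hpow : (2 : ℝ) ^ q = 2 ^ (q - 2) * 4 := by
    rw [← pow_sub_mul_pow 2 (show 2 ≤ q by omega)]
    norm_num
  rw [(T_branch_not_mem_Ioo_and_T_T_branch hp hpq hco hy i).2, show q - 2 + 1 = q - 1 by omega,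
    natCast_pred_eq_neg_one, neg_one_mul, rotPoint_neg_eq hp hpq, hpow]
  field_simp

theorem iterate_T_branch (hp : 0 < p) (hpq : p < q) (hco : p.Coprime q)
    (hy : y ∈ Icc (leftPt p q) (rightPt p q)) (i : Fin 2) : T^[q] (branch p q i y) = y := by
  have hiterate : T^[q] (branch p q i y) = T^[q - 2] (T (T (branch p q i y))) := by
    rw [← Function.iterate_succ_apply, ← Function.iterate_succ_apply]
    congr 2
    omega
  rw [hiterate, T_T_branch hp hpq hco hy, iterate_T_rotPoint_mul_add hp hpq hco
    ⟨sub_nonneg.2 hy.1, sub_le_sub_right hy.2 _⟩ (by omega), add_sub_cancel]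

theorem iterate_T_branch_not_mem_hole (hp : 0 < p) (hpq : p < q) (hco : p.Coprime q)
    (hy : y ∈ Icc (leftPt p q) (rightPt p q)) (i : Fin 2) {m : ℕ} (hm : m < q) :
    T^[m] (branch p q i y) ∉ hole p q := by
  have hδ := one_fourth_lt_rightPt_sub_leftPt hp hpq hco
  have hsub : hole p q ⊆ Ioo (leftPt p q) (rightPt p q) :=
    Ioo_subset_Ioo (by linarith) (by linarith)
  match m with
  | 0 => exact branch_not_mem_hole hp hpq hco hy i
  | 1 => exact fun h ↦ (T_branch_not_mem_Ioo_and_T_T_branch hp hpq hco hy i).1 (hsub h)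
  | m + 2 =>
    rw [Function.iterate_succ_apply, Function.iterate_succ_apply, T_T_branch hp hpq hco hy]
    exact fun h ↦ iterate_T_rotPoint_mul_add_not_mem_Ioo hp hpq hco
      ⟨sub_nonneg.2 hy.1, sub_le_sub_right hy.2 _⟩ (by omega) (by omega) (hsub h)

end FirstReturn

section Survivors

variable {p q : ℕ} [NeZero q]

theorem inv_two_pow_mem_Ioo (q : ℕ) [NeZero q] : ((2 : ℝ) ^ q)⁻¹ ∈ Ioo (0 : ℝ) 1 :=
  ⟨by positivity, inv_lt_one_of_one_lt₀ (one_lt_pow₀ one_lt_two (NeZero.ne q))⟩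

theorem inv_two_pow_rpow_inv (q : ℕ) [NeZero q] : ((2 : ℝ) ^ q)⁻¹ ^ (q : ℝ)⁻¹ = 2⁻¹ := by
  rw [← inv_pow, Real.pow_rpow_inv_natCast (by norm_num) (NeZero.ne q)]

theorem dimH_survivors_hole_inter_Icc_le (hp : 0 < p) (hpq : p < q) (hco : p.Coprime q) :
    dimH (survivors (hole p q) ∩ Icc (leftPt p q) (rightPt p q)) ≤ (q : ℝ≥0∞)⁻¹ := by
  rw [← ENNReal.coe_natCast, ← ENNReal.coe_inv (NeZero.ne _)]
  refine dimH_le_of_subset_iUnion_image (lipschitzWith_branch p q)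
    (inv_lt_one_of_one_lt₀ (one_lt_pow₀ one_lt_two (NeZero.ne q))) ?_
    ((Metric.isBounded_Icc _ _).subset inter_subset_right).ediam_ne_top ?_
  · rw [← NNReal.coe_le_coe]
    push_cast
    rw [inv_two_pow_rpow_inv]
    simp
  · rintro x ⟨hx, hxIcc⟩
    obtain ⟨i, y, hy, rfl⟩ :=
      exists_branch_eq hp hpq hco hxIcc (not_mem_of_mem_survivors hx)
    have hiter := (mapsTo_T_survivors _).iterate q hx
    rw [iterate_T_branch hp hpq hco hy] at hiter
    exact mem_iUnion.2 ⟨i, y, ⟨hiter, hy⟩, rfl⟩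

theorem dimH_survivors_hole_le (hp : 0 < p) (hpq : p < q) (hco : p.Coprime q) :
    dimH (survivors (hole p q)) ≤ (q : ℝ≥0∞)⁻¹ := by
  have hnever : dimH (survivors (hole p q ∪ Icc (leftPt p q) (rightPt p q))) = 0 :=
    nonpos_iff_eq_zero.1 <| (dimH_mono (survivors_anti subset_union_right)).trans_eq <|
      dimH_survivors_Icc_eq_zero (leftPt_le_half hpq) (half_lt_rightPt hp hpq hco).le
        (one_fourth_lt_rightPt_sub_leftPt hp hpq hco)
  refine (dimH_survivors_le_max _ (Icc (leftPt p q) (rightPt p q))).trans (max_le ?_ ?_)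
  · rw [hnever]
    exact zero_le
  · exact dimH_survivors_hole_inter_Icc_le hp hpq hco

theorem endPt_mem_Icc (hp : 0 < p) (hpq : p < q) (hco : p.Coprime q) (i : Fin 2) :
    endPt p q i ∈ Icc (leftPt p q) (rightPt p q) := by
  have hle : leftPt p q ≤ rightPt p q := by
    linarith [one_fourth_lt_rightPt_sub_leftPt hp hpq hco]
  fin_cases i
  exacts [left_mem_Icc.2 hle, right_mem_Icc.2 hle]

theorem iterate_T_codedPoint_endPt_not_mem_hole (hp : 0 < p) (hpq : p < q) (hco : p.Coprime q)
    (m : ℕ) (x : ℕ → Fin 2) : T^[m] (codedPoint (2 ^ q)⁻¹ (endPt p q) x) ∉ hole p q := by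
  have hr := inv_two_pow_mem_Ioo q
  induction m using Nat.strong_induction_on generalizing x with
  | _ m ih =>
    have hmem := codedPoint_mem_Icc hr.1.le hr.2 (endPt_mem_Icc hp hpq hco) fun n ↦ x (n + 1)
    rw [codedPoint_eq hr.1.le hr.2 (endPt_mem_Icc hp hpq hco), ← branch]
    rcases lt_or_ge m q with hm | hm
    · exact iterate_T_branch_not_mem_hole hp hpq hco hmem _ hm
    · rw [← Nat.sub_add_cancel hm, Function.iterate_add_apply, iterate_T_branch hp hpq hco hmem]
      exact ih (m - q) (Nat.sub_lt_self (NeZero.pos q) hm) _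

theorem le_dimH_survivors_hole (hp : 0 < p) (hpq : p < q) (hco : p.Coprime q) :
    (q : ℝ≥0∞)⁻¹ ≤ dimH (survivors (hole p q)) := by
  have hr := inv_two_pow_mem_Ioo q
  have hsub : range (codedPoint (2 ^ q)⁻¹ (endPt p q)) ⊆ survivors (hole p q) := by
    rintro _ ⟨x, rfl⟩
    refine ⟨?_, fun m ↦ iterate_T_codedPoint_endPt_not_mem_hole hp hpq hco m x⟩
    have hmem := codedPoint_mem_Icc hr.1.le hr.2 (endPt_mem_Icc hp hpq hco) x
    exact ⟨(rotPoint_mem_Icc p _).1.trans hmem.1, hmem.2.trans (rotPoint_mem_Icc p _).2⟩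
  refine le_trans ?_ (dimH_mono hsub)
  rw [← ENNReal.coe_natCast, ← ENNReal.coe_inv (NeZero.ne _)]
  refine le_dimH_range_codedPoint (δ := rightPt p q - leftPt p q) one_lt_two hr.1 hr.2 ?_
    (endPt_mem_Icc hp hpq hco) ?_ ?_
  · push_cast
    exact inv_two_pow_rpow_inv q
  · simp [Fin.forall_fin_two, endPt, abs_sub_comm (leftPt p q), le_abs_self, -tsub_le_iff_right]
  · rw [one_sub_mul, inv_two_pow_mul_rightPt_sub_leftPt hp hpq hco]
    linarith [rightPt_le_three_fourths hp hpq, half_lt_rightPt hp hpq hco,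
      rightPt_le_two_mul_leftPt hp hpq hco]

end Survivors

section ExtremalWords

variable {p q : ℕ} {s t w : List Bool}

theorem periodize_rotate (w : List Bool) (k i : ℕ) :
    periodize (w.rotate k) i = periodize w (i + k) := by
  rcases eq_or_ne w [] with rfl | hne
  · simp [periodize]
  have hlt (j : ℕ) : j % w.length < w.length := Nat.mod_lt j (List.length_pos_iff.2 hne)
  rw [periodize, periodize, List.getD_eq_getElem _ _ (by simpa using hlt i),
    List.getD_eq_getElem _ _ (hlt _), List.getElem_rotate]
  simp

theorem head?_eq_some_iff_periodize_zero (hw : w ≠ []) {b : Bool} :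
    w.head? = some b ↔ periodize w 0 = b := by
  cases w with
  | nil => exact absurd rfl hw
  | cons a l => simp [periodize]

theorem CyclBalanced.exists_periodize_rotate_eq_rotWord (hw : CyclBalanced w) (hne : w ≠ [])
    (hco : (w.count true).Coprime w.length) (f : ZMod w.length) :
    ∃ k, periodize (w.rotate k) = rotWord (w.count true) f := by
  have : NeZero w.length := ⟨(List.length_pos_iff.2 hne).ne'⟩
  obtain ⟨e, he⟩ := hw.exists_periodize_eq_rotWord hne
  obtain ⟨k, -, hk⟩ := exists_natCast_mul_eq hco (e - f)
  exact ⟨k, funext fun i ↦ by rw [periodize_rotate, he, rotWord_add, hk, sub_sub_cancel]⟩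

theorem IsSWord.piW_periodize (hp : 0 < p) (hpq : p < q) (hco : p.Coprime q)
    (hs : IsSWord p q s) : piW (periodize s) = leftPt p q := by
  obtain ⟨rfl, rfl, hbal, hhead, hmax⟩ := hs
  have hne : s ≠ [] := List.length_pos_iff.1 (by omega)
  have : NeZero s.length := ⟨by omega⟩
  obtain ⟨k, hk⟩ := hbal.exists_periodize_rotate_eq_rotWord hne hco (s.count true)
  have hrlen : (s.rotate k).length = s.length := List.length_rotate ..
  have hrhead : (s.rotate k).head? = some false := by
    rw [head?_eq_some_iff_periodize_zero (by simpa using hne), hk, rotWord_zero,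
      ZMod.val_natCast_of_lt hpq, decide_eq_false (lt_irrefl _)]
  refine le_antisymm ?_ ?_
  · obtain ⟨e, he⟩ := hbal.exists_periodize_eq_rotWord hne
    rw [head?_eq_some_iff_periodize_zero hne, he, rotWord_zero, decide_eq_false_iff_not,
      not_lt] at hhead
    rw [he]
    exact rotPoint_le_leftPt hp hpq hco hhead
  · have hle := (hmax _ hrlen ((List.rotate_perm s k).count_eq true) (hbal.rotate k)
      hrhead).piW_periodize_le hrlen hne
    rwa [hk] at hle

theorem IsTWord.piW_periodize (hp : 0 < p) (hpq : p < q) (hco : p.Coprime q)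
    (ht : IsTWord p q t) : piW (periodize t) = rightPt p q := by
  obtain ⟨rfl, rfl, hbal, hhead, hmin⟩ := ht
  have hne : t ≠ [] := List.length_pos_iff.1 (by omega)
  have : NeZero t.length := ⟨by omega⟩
  obtain ⟨k, hk⟩ := hbal.exists_periodize_rotate_eq_rotWord hne hco ((t.count true : ZMod _) - 1)
  have hrlen : (t.rotate k).length = t.length := List.length_rotate ..
  have hrne : t.rotate k ≠ [] := by simpa using hne
  have hrhead : (t.rotate k).head? = some true := by
    rw [head?_eq_some_iff_periodize_zero hrne, hk, rotWord_zero, val_natCast_sub_one hp hpq,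
      decide_eq_true (by omega)]
  refine le_antisymm ?_ ?_
  · have hle := (hmin _ hrlen ((List.rotate_perm t k).count_eq true) (hbal.rotate k)
      hrhead).piW_periodize_le hrlen.symm hrne
    rwa [hk] at hle
  · obtain ⟨e, he⟩ := hbal.exists_periodize_eq_rotWord hne
    rw [head?_eq_some_iff_periodize_zero hne, he, rotWord_zero, decide_eq_true_iff] at hhead
    rw [he]
    exact rightPt_le_rotPoint hp hpq hco hhead

theorem Ioo_piW_wordThenPeriodic_eq_hole (hp : 0 < p) (hpq : p < q) (hco : p.Coprime q)
    (hs : IsSWord p q s) (ht : IsTWord p q t) :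
    Ioo (piW (wordThenPeriodic s t)) (piW (wordThenPeriodic t s)) = hole p q := by
  have : NeZero q := ⟨by omega⟩
  have hgap := rightPt_sub_leftPt_eq hp hpq hco
  rw [piW_wordThenPeriodic_eq, piW_wordThenPeriodic_eq, hs.piW_periodize hp hpq hco,
    ht.piW_periodize hp hpq hco, hs.1, ht.1, hole]
  congr 1
  · linarith
  · rw [← neg_sub (rightPt p q), neg_div]
    linarith

end ExtremalWords

theorem stmt_18 (p q : ℕ) (hp : 0 < p) (hpq : p < q) (hco : Nat.Coprime p q)
    (s t : List Bool) (hs : IsSWord p q s) (ht : IsTWord p q t) :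
    dimH {x : ℝ | x ∈ Set.Icc (0:ℝ) 1 ∧ ∀ n : ℕ,
        T^[n] x ∉ Set.Ioo (piW (wordThenPeriodic s t)) (piW (wordThenPeriodic t s))}
      = (q : ENNReal)⁻¹ := by
  have : NeZero q := ⟨by omega⟩
  rw [Ioo_piW_wordThenPeriodic_eq_hole hp hpq hco hs ht]
  exact le_antisymm (dimH_survivors_hole_le hp hpq hco) (le_dimH_survivors_hole hp hpq hco)
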